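/- arXiv:2602.21218 — 2 statements merged into one kernel-verified Lean document; each statement's English description precedes it below -/
import Mathlib

section
/- Gaussian mechanism (Lemma A.1 / Dwork–Roth bound). Let X be a measurable space, n ≥ 1, d ≥ 1, and let f : (Fin n → X) → EuclideanSpace ℝ (Fin d) satisfy ‖f(D) − f(D')‖ ≤ Δ for all neighboring datasets D, D' (substitution relation), where Δ ≥ 0. Let ε ∈ (0, 1], δ ∈ (0, 1), and σ ≥ Δ · √(2 · ln(1.25/δ)) / ε. Then the mechanism M defined by M(D) = the pushforward of the centered Gaussian measure N(0, σ²I_d) on EuclideanSpace ℝ (Fin d) under the translation x ↦ f(D) + x satisfies (ε, δ)-differential privacy: for all neighboring D, D' and every measurable set O, M(D)(O) ≤ exp(ε) · M(D')(O) + δ. -/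
/-!
The privacy loss is controlled by a moment bound instead of a Gaussian tail bound.
Let `g` be the density of `N(0, σ² I_d)`. If `exp y ≤ 1 + K exp ((1 + l) y)` for all real `y`
(convexity gives this with `K = 1 / (1 + l)`, and `K = 1/4` works for `l = 1`), then taking `y` to
be the log-likelihood ratio minus `ε` and completing the square gives, pointwise,
`g (x - u) ≤ exp ε * g (x - v) + K * exp (l (l + 1) q - l ε) * g (x - m)`,
where `q = ‖u - v‖² / (2 σ²)` and `m = (1 + l) u - l v`. Since `g` has total mass one, integrating
over a measurable set leaves only the scalar inequality `K * exp (l (l + 1) q - l ε) ≤ δ`.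

With `L = log (1.25 / δ)` the assumption on `σ` reads `4 q L ≤ ε²`. For `L ≥ 1/2` the optimal order
`l = 2 L / ε - 1/2` gives the bound `(2/3) * exp (1/2 - L) ≤ 1.25 * exp (-L) = δ`; for `L ≤ 1/2`
the order `l = 1` with its sharp constant `1/4` suffices, because `L ≥ log 1.25 > 0.22`.
-/


open MeasureTheory
open scoped BigOperators ENNReal

/-- Two size-`n` datasets are neighboring under the substitution relation:
they differ in exactly one coordinate. -/
def Neighbors {X : Type*} {n : ℕ} (D D' : Fin n → X) : Prop :=
  ∃ j : Fin n, D j ≠ D' j ∧ ∀ i : Fin n, i ≠ j → D i = D' i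

/-- A mechanism `M` on size-`n` datasets satisfies `(ε, δ)`-differential
privacy if for all neighboring datasets and all measurable output sets `O`,
`M D O ≤ exp ε * M D' O + δ`. -/
def DP {X : Type*} [MeasurableSpace X] {Ω : Type*} [MeasurableSpace Ω] {n : ℕ}
    (M : (Fin n → X) → Measure Ω) (ε δ : ℝ) : Prop :=
  ∀ D D' : Fin n → X, Neighbors D D' → ∀ O : Set Ω, MeasurableSet O →
    M D O ≤ ENNReal.ofReal (Real.exp ε) * M D' O + ENNReal.ofReal δ

/-- The centered Gaussian measure `N(0, σ² I_d)` on `EuclideanSpace ℝ (Fin d)`,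
given by its density with respect to Lebesgue measure. -/
noncomputable def gaussianMeasure (d : ℕ) (σ : ℝ) : Measure (EuclideanSpace ℝ (Fin d)) :=
  volume.withDensity fun x =>
    ENNReal.ofReal ((2 * Real.pi * σ ^ 2) ^ (-(d : ℝ) / 2) *
      Real.exp (-‖x‖ ^ 2 / (2 * σ ^ 2)))

lemma exp_le_one_add_mul_exp {l : ℝ} (hl : 0 ≤ l) (y : ℝ) :
    Real.exp y ≤ 1 + 1 / (1 + l) * Real.exp ((1 + l) * y) := by
  have h1 : (0 : ℝ) < 1 + l := by linarith
  have h := one_add_mul_self_le_rpow_one_add (s := Real.exp y - 1)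
    (by linarith [Real.exp_pos y]) (p := 1 + l) (by linarith)
  rw [show 1 + (Real.exp y - 1) = Real.exp y by ring, ← Real.exp_mul, mul_comm y] at h
  have h2 : Real.exp y - 1 ≤ Real.exp ((1 + l) * y) / (1 + l) := by
    rw [le_div_iff₀ h1]
    linarith
  calc Real.exp y ≤ 1 + Real.exp ((1 + l) * y) / (1 + l) := by linarith
    _ = _ := by ring

/-- Choice of the moment order `l` and the constant `K`; here `L` plays the role of
`log (1.25 / δ)`, so the right-hand side of the last inequality is `δ`. -/
lemma exists_order {ε L q : ℝ} (hε : 0 < ε) (hε1 : ε ≤ 1) (hL : 0.22 ≤ L)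
    (hq : 4 * q * L ≤ ε ^ 2) :
    ∃ l K : ℝ, (∀ y, Real.exp y ≤ 1 + K * Real.exp ((1 + l) * y)) ∧
      K * Real.exp (l * (l + 1) * q - l * ε) ≤ 1.25 * Real.exp (-L) := by
  have hL0 : 0 < L := by linarith
  have hexp1 := Real.exp_one_lt_d9
  have hhalf : Real.exp (1 / 2) ^ 2 = Real.exp 1 := by
    rw [← Real.exp_nat_mul]
    norm_num
  have hhalf_pos := Real.exp_pos (1 / 2)
  have hhalf_le : Real.exp (1 / 2) ≤ 1.65 := by nlinarith
  rcases le_total L (1 / 2) with h | h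
  · refine ⟨1, 1 / 4, fun y => ?_, ?_⟩
    · rw [show (1 + 1) * y = y + y by ring, Real.exp_add]
      nlinarith [sq_nonneg (Real.exp y - 2)]
    · have hE : 2 * q - ε + L ≤ 1 + 1 / 2 := by
        have h1 : 2 * L * (2 * q - ε) ≤ 1 - 2 * L := by
          nlinarith [mul_nonneg (sub_nonneg.2 hε1) (by linarith : 0 ≤ 1 + ε - 2 * L)]
        have h2 : 2 * L * (2 * q - ε + L) ≤ 2 * L * (1 + 1 / 2) := by nlinarith
        exact le_of_mul_le_mul_left h2 (by linarith)
      have h5 : Real.exp (2 * q - ε + L) ≤ 5 := by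
        refine (Real.exp_le_exp.2 hE).trans ?_
        rw [Real.exp_add]
        nlinarith
      have h6 : Real.exp (1 * (1 + 1) * q - 1 * ε) = Real.exp (2 * q - ε + L) * Real.exp (-L) := by
        rw [← Real.exp_add]
        ring_nf
      rw [h6]
      nlinarith [Real.exp_pos (-L)]
  · obtain ⟨l, hl⟩ : ∃ l, l = 2 * L / ε - 1 / 2 := ⟨_, rfl⟩
    have hlε : (l + 1 / 2) * ε = 2 * L := by
      rw [hl]
      field_simp
      ring
    have hl2 : 1 / 2 ≤ l := by nlinarith
    refine ⟨l, 1 / (1 + l), exp_le_one_add_mul_exp (by linarith), ?_⟩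
    have hE : l * (l + 1) * q - l * ε ≤ 1 / 2 + -L := by
      have hll : 0 ≤ l * (l + 1) := by positivity
      have h1 : l * (l + 1) * (4 * q * L) ≤ 4 * L ^ 2 := by
        have : l * (l + 1) * ε ^ 2 = (2 * L) ^ 2 - ε ^ 2 / 4 := by
          rw [← hlε]
          ring
        nlinarith [mul_le_mul_of_nonneg_left hq hll]
      have h2 : l * (l + 1) * q ≤ L := by
        have : 4 * L * (l * (l + 1) * q) ≤ 4 * L * L := by linarith
        exact le_of_mul_le_mul_left this (by linarith)
      linarith
    have hK : 1 / (1 + l) ≤ 2 / 3 := by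
      rw [div_le_div_iff₀ (by linarith) (by norm_num)]
      linarith
    calc 1 / (1 + l) * Real.exp (l * (l + 1) * q - l * ε)
        ≤ 2 / 3 * Real.exp (1 / 2 + -L) := by gcongr
      _ ≤ 1.25 * Real.exp (-L) := by
        rw [Real.exp_add]
        nlinarith [Real.exp_pos (-L)]

/-- The density of `N(0, σ² I_d)`. -/
noncomputable def gaussianDensity (d : ℕ) (σ : ℝ) (x : EuclideanSpace ℝ (Fin d)) : ℝ≥0∞ :=
  ENNReal.ofReal ((2 * Real.pi * σ ^ 2) ^ (-(d : ℝ) / 2) *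
      Real.exp (-‖x‖ ^ 2 / (2 * σ ^ 2)))

lemma measurable_gaussianDensity (d : ℕ) (σ : ℝ) : Measurable (gaussianDensity d σ) := by
  unfold gaussianDensity
  fun_prop

lemma lintegral_gaussianDensity (d : ℕ) {σ : ℝ} (hσ : 0 < σ) :
    ∫⁻ x, gaussianDensity d σ x = 1 := by
  have hb : 0 < 1 / (2 * σ ^ 2) := by positivity
  have hI := GaussianFourier.integral_rexp_neg_mul_sq_norm (V := EuclideanSpace ℝ (Fin d)) hb
  have hpos : 0 < 2 * Real.pi * σ ^ 2 := by positivity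
  rw [finrank_euclideanSpace_fin,
    show Real.pi / (1 / (2 * σ ^ 2)) = 2 * Real.pi * σ ^ 2 by field_simp] at hI
  -- A nonzero Bochner integral certifies integrability.
  have hint : Integrable
      (fun x : EuclideanSpace ℝ (Fin d) => Real.exp (-(1 / (2 * σ ^ 2)) * ‖x‖ ^ 2)) := by
    refine Integrable.of_integral_ne_zero ?_
    rw [hI]
    positivity
  have hfun : ∀ x : EuclideanSpace ℝ (Fin d), gaussianDensity d σ x =
      ENNReal.ofReal ((2 * Real.pi * σ ^ 2) ^ (-(d : ℝ) / 2) *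
        Real.exp (-(1 / (2 * σ ^ 2)) * ‖x‖ ^ 2)) := by
    intro x
    unfold gaussianDensity
    congr 3
    ring
  simp_rw [hfun]
  rw [← ofReal_integral_eq_lintegral_ofReal (hint.const_mul _)
    (Filter.Eventually.of_forall fun x => by positivity), integral_const_mul, hI,
    ← Real.rpow_add hpos]
  rw [show -(d : ℝ) / 2 + (d : ℝ) / 2 = 0 by ring]
  simp

lemma map_gaussianMeasure_apply (d : ℕ) (σ : ℝ) (u : EuclideanSpace ℝ (Fin d))
    {O : Set (EuclideanSpace ℝ (Fin d))} (hO : MeasurableSet O) :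
    (gaussianMeasure d σ).map (fun x => u + x) O = ∫⁻ x in O, gaussianDensity d σ (x - u) := by
  have hpre : MeasurableSet ((fun x => u + x) ⁻¹' O) := (measurable_const_add u) hO
  rw [Measure.map_apply (measurable_const_add u) hO, gaussianMeasure,
    withDensity_apply _ hpre, ← lintegral_indicator hpre, ← lintegral_indicator hO,
    ← lintegral_add_left_eq_self (O.indicator _) u]
  refine lintegral_congr fun x => ?_
  simp only [Set.indicator, gaussianDensity, add_sub_cancel_left]
  rfl

/-- Completing the square: this makes `g (x - u) ^ (1 + l) * g (x - v) ^ (-l)` a constant multiple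
of a third translate of the Gaussian density `g`. -/
lemma sq_norm_extrapolate {d : ℕ} (x u v : EuclideanSpace ℝ (Fin d)) (l : ℝ) :
    ‖x - ((1 + l) • u - l • v)‖ ^ 2 =
      (1 + l) * ‖x - u‖ ^ 2 - l * ‖x - v‖ ^ 2 + l * (l + 1) * ‖u - v‖ ^ 2 := by
  have h1 : x - ((1 + l) • u - l • v) = (1 + l) • (x - u) - l • (x - v) := by module
  have h2 : u - v = (x - v) - (x - u) := by abel
  rw [h1, h2, norm_sub_sq_real ((1 + l) • (x - u)), norm_sub_sq_real (x - v), norm_smul, norm_smul, mul_pow, mul_pow,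
    inner_smul_left, inner_smul_right, real_inner_comm (x - u) (x - v)]
  simp only [Real.norm_eq_abs, sq_abs, conj_trivial]
  ring

/-- Pointwise form of the privacy bound: the additive error `δ` is carried by a third translate of
the density, whose total mass is one. -/
lemma gaussianDensity_le {d : ℕ} {σ ε δ l K : ℝ} (hσ : 0 < σ) (hδ : 0 ≤ δ)
    (u v x : EuclideanSpace ℝ (Fin d))
    (hK : ∀ y, Real.exp y ≤ 1 + K * Real.exp ((1 + l) * y))
    (hKδ : K * Real.exp (l * (l + 1) * (‖u - v‖ ^ 2 / (2 * σ ^ 2)) - l * ε) ≤ δ) :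
    gaussianDensity d σ (x - u) ≤ ENNReal.ofReal (Real.exp ε) * gaussianDensity d σ (x - v) +
      ENNReal.ofReal δ * gaussianDensity d σ (x - ((1 + l) • u - l • v)) := by
  unfold gaussianDensity
  rw [← ENNReal.ofReal_mul (Real.exp_pos _).le, ← ENNReal.ofReal_mul hδ,
    ← ENNReal.ofReal_add (by positivity) (by positivity)]
  refine ENNReal.ofReal_le_ofReal ?_
  obtain ⟨A, hA⟩ : ∃ A, A = -‖x - u‖ ^ 2 / (2 * σ ^ 2) := ⟨_, rfl⟩
  obtain ⟨B, hB⟩ : ∃ B, B = -‖x - v‖ ^ 2 / (2 * σ ^ 2) := ⟨_, rfl⟩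
  obtain ⟨q, hq⟩ : ∃ q, q = ‖u - v‖ ^ 2 / (2 * σ ^ 2) := ⟨_, rfl⟩
  have hC : -‖x - ((1 + l) • u - l • v)‖ ^ 2 / (2 * σ ^ 2) =
      (1 + l) * A - l * B - l * (l + 1) * q := by
    rw [sq_norm_extrapolate, hA, hB, hq]
    ring
  rw [hC, ← hA, ← hB]
  rw [← hq] at hKδ
  have key : Real.exp A ≤ Real.exp ε * Real.exp B +
      δ * Real.exp ((1 + l) * A - l * B - l * (l + 1) * q) := by
    have h1 := mul_le_mul_of_nonneg_left (hK (A - B - ε)) (Real.exp_pos (ε + B)).le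
    have h2 := mul_le_mul_of_nonneg_right hKδ
      (Real.exp_pos ((1 + l) * A - l * B - l * (l + 1) * q)).le
    have e1 : Real.exp (ε + B) * Real.exp (A - B - ε) = Real.exp A := by
      rw [← Real.exp_add]
      ring_nf
    have e2 : Real.exp (ε + B) * Real.exp ((1 + l) * (A - B - ε)) =
        Real.exp (l * (l + 1) * q - l * ε) *
          Real.exp ((1 + l) * A - l * B - l * (l + 1) * q) := by
      rw [← Real.exp_add, ← Real.exp_add]
      ring_nf
    have e3 : Real.exp (ε + B) * (1 + K * Real.exp ((1 + l) * (A - B - ε))) =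
        Real.exp (ε + B) + K * (Real.exp (ε + B) * Real.exp ((1 + l) * (A - B - ε))) := by ring
    rw [e1, e3, e2, Real.exp_add ε B] at h1
    linarith
  have hc : 0 ≤ (2 * Real.pi * σ ^ 2) ^ (-(d : ℝ) / 2) := by positivity
  calc _ ≤ (2 * Real.pi * σ ^ 2) ^ (-(d : ℝ) / 2) * (Real.exp ε * Real.exp B +
      δ * Real.exp ((1 + l) * A - l * B - l * (l + 1) * q)) := mul_le_mul_of_nonneg_left key hc
    _ = _ := by ring

/-- **Gaussian mechanism (Dwork–Roth bound).** If `f` has ℓ₂-sensitivity at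
most `Δ` under the substitution neighboring relation, `ε ∈ (0,1]`, `δ ∈ (0,1)`,
and `σ ≥ Δ √(2 ln(1.25/δ)) / ε`, then adding `N(0, σ² I_d)` noise to `f`
is `(ε, δ)`-differentially private. -/
theorem gaussian_mechanism_dp {X : Type*} [MeasurableSpace X] {n d : ℕ}
    (hn : 1 ≤ n) (hd : 1 ≤ d)
    (f : (Fin n → X) → EuclideanSpace ℝ (Fin d)) {Δ : ℝ} (hΔ : 0 ≤ Δ)
    (hsens : ∀ D D' : Fin n → X, Neighbors D D' → ‖f D - f D'‖ ≤ Δ)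
    {ε δ σ : ℝ} (hε : 0 < ε) (hε1 : ε ≤ 1) (hδ0 : 0 < δ) (hδ1 : δ < 1)
    (hσ : σ ≥ Δ * Real.sqrt (2 * Real.log (1.25 / δ)) / ε) :
    DP (fun D => (gaussianMeasure d σ).map (fun x => f D + x)) ε δ := by
  intro D D' hDD O hO
  have hσ0 : 0 ≤ σ := le_trans (by positivity) hσ
  rcases hσ0.eq_or_lt with h0 | hσpos
  · -- For `σ = 0` the density is identically `0 ^ (-d / 2) = 0`, because `d ≠ 0`.
    have hd0 : -(d : ℝ) / 2 ≠ 0 := by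
      have : (1 : ℝ) ≤ d := by exact_mod_cast hd
      intro h
      linarith
    have hz : gaussianMeasure d σ = 0 := by
      simp [gaussianMeasure, ← h0, Real.zero_rpow hd0]
    simp [hz]
  obtain ⟨L, hLdef⟩ : ∃ L, L = Real.log (1.25 / δ) := ⟨_, rfl⟩
  have hL : 0.22 ≤ L := by
    have h1 : Real.exp 0.22 ≤ 1.25 := by
      have h := Real.exp_bound' (x := 0.22) (by norm_num) (by norm_num) (n := 4) (by norm_num)
      refine h.trans ?_
      norm_num [Finset.sum_range_succ, Nat.factorial]
    rw [hLdef, Real.le_log_iff_exp_le (by positivity)]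
    refine h1.trans ?_
    rw [le_div_iff₀ hδ0]
    linarith
  have hδ : 1.25 * Real.exp (-L) = δ := by
    rw [hLdef, Real.exp_neg, Real.exp_log (by positivity)]
    field_simp
  have hq : 4 * (‖f D - f D'‖ ^ 2 / (2 * σ ^ 2)) * L ≤ ε ^ 2 := by
    rw [← hLdef, ge_iff_le, div_le_iff₀ hε] at hσ
    have h1 : ‖f D - f D'‖ * Real.sqrt (2 * L) ≤ σ * ε :=
      (mul_le_mul_of_nonneg_right (hsens D D' hDD) (Real.sqrt_nonneg _)).trans hσ
    have h2 := pow_le_pow_left₀ (by positivity) h1 2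
    rw [mul_pow, mul_pow, Real.sq_sqrt (by linarith)] at h2
    rw [show 4 * (‖f D - f D'‖ ^ 2 / (2 * σ ^ 2)) * L = ‖f D - f D'‖ ^ 2 * (2 * L) / σ ^ 2 by
      field_simp; ring, div_le_iff₀ (by positivity)]
    linarith
  obtain ⟨l, K, hK, hKδ⟩ := exists_order hε hε1 hL hq
  rw [hδ] at hKδ
  have hmeas : ∀ w, Measurable fun x => gaussianDensity d σ (x - w) := fun w =>
    (measurable_gaussianDensity d σ).comp (measurable_sub_const w)
  simp only [map_gaussianMeasure_apply d σ _ hO]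
  calc ∫⁻ x in O, gaussianDensity d σ (x - f D)
      ≤ ∫⁻ x in O, (ENNReal.ofReal (Real.exp ε) * gaussianDensity d σ (x - f D') +
          ENNReal.ofReal δ * gaussianDensity d σ (x - ((1 + l) • f D - l • f D'))) :=
        lintegral_mono fun x => gaussianDensity_le hσpos hδ0.le _ _ x hK hKδ
    _ = ENNReal.ofReal (Real.exp ε) * (∫⁻ x in O, gaussianDensity d σ (x - f D')) +
          ENNReal.ofReal δ *
            ∫⁻ x in O, gaussianDensity d σ (x - ((1 + l) • f D - l • f D')) := by
        rw [lintegral_add_left ((hmeas _).const_mul _), lintegral_const_mul _ (hmeas _),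
          lintegral_const_mul _ (hmeas _)]
    _ ≤ ENNReal.ofReal (Real.exp ε) * (∫⁻ x in O, gaussianDensity d σ (x - f D')) +
          ENNReal.ofReal δ * 1 := by
        gcongr
        refine (setLIntegral_le_lintegral _ _).trans ?_
        rw [lintegral_sub_right_eq_self, lintegral_gaussianDensity d hσpos]
    _ = _ := by rw [mul_one]
end

section
/- L-fold basic composition. Let X be a measurable space, n ≥ 1, L ≥ 1, and for each ℓ ∈ Fin L let M_ℓ : (Fin n → X) → Measure Ω_ℓ be a mechanism (with each M_ℓ(D) a probability measure) satisfying (ε, δ)-differential privacy under the substitution neighboring relation. Then the joint mechanism D ↦ ⨂_{ℓ ∈ Fin L} M_ℓ(D), assigning to each dataset the product (independent) probability measure on Π_{ℓ} Ω_ℓ, satisfies (L·ε, L·δ)-differential privacy. -/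
/-!
Write `γ = exp ε`. Everything is done for pairs of measures `P, Q` with `P O ≤ γ Q O + δ` for all
measurable `O`, in `ℝ≥0∞`, so no sign conditions on `ε` or `δ` are needed.

By the layer-cake formula such a bound on sets extends to measurable test functions with values in
`[0, 1]`: `∫ f dP ≤ γ ∫ f dQ + δ` (`lintegral_le_of_forall_measure_le`). For a product of two
pairs, slice `O` by the first coordinate. The slice satisfies
`P₂(Oₓ) ≤ min (γ₂ Q₂(Oₓ)) 1 + δ₂`, and the truncation at `1` makes the right-hand minimum an
admissible test function for `(P₁, Q₁)`. Hence the `δ`s add and the `γ`s multiply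
(`prod_measure_le`), without the factor `γ₂` on `δ₁` that a naive estimate would give. Induction
on the number of factors (`pi_measure_le`) finishes the proof.
-/

open MeasureTheory
open scoped ENNReal

/-- A setwise bound `P ≤ γ Q + δ` passes to integrals of `[0, 1]`-valued functions. The additive
error stays `δ` because the superlevel sets `{t < f}` are empty for `t ≥ 1`. -/
lemma lintegral_le_of_forall_measure_le {α : Type*} [MeasurableSpace α] {P Q : Measure α}
    {γ δ : ℝ≥0∞} (h : ∀ O, MeasurableSet O → P O ≤ γ * Q O + δ)
    {f : α → ℝ≥0∞} (hf : Measurable f) (hf1 : ∀ x, f x ≤ 1) :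
    ∫⁻ x, f x ∂P ≤ γ * ∫⁻ x, f x ∂Q + δ := by
  have hg : Measurable fun x => (f x).toReal := hf.ennreal_toReal
  have layer (μ : Measure α) :
      ∫⁻ x, f x ∂μ = ∫⁻ t in Set.Ioi (0 : ℝ), μ {x | t < (f x).toReal} := by
    rw [← lintegral_eq_lintegral_meas_lt μ (Filter.Eventually.of_forall fun x =>
      ENNReal.toReal_nonneg) hg.aemeasurable]
    refine lintegral_congr fun x => ?_
    rw [ENNReal.ofReal_toReal ((hf1 x).trans_lt ENNReal.one_lt_top).ne]
  have hQm : Measurable fun t : ℝ => Q {x | t < (f x).toReal} :=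
    Antitone.measurable fun s t hst => measure_mono fun x (hx : t < _) => hst.trans_lt hx
  rw [layer P, layer Q, ← lintegral_const_mul γ hQm]
  calc ∫⁻ t in Set.Ioi (0 : ℝ), P {x | t < (f x).toReal}
      ≤ ∫⁻ t in Set.Ioi (0 : ℝ), (γ * Q {x | t < (f x).toReal}
          + (Set.Iio (1 : ℝ)).indicator (fun _ => δ) t) := by
        refine lintegral_mono fun t => ?_
        by_cases ht : t < 1
        · simpa [Set.indicator, ht] using h _ (measurableSet_lt measurable_const hg)
        · have : {x | t < (f x).toReal} = ∅ := by
            ext x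
            have : (f x).toReal ≤ 1 :=
              ENNReal.toReal_le_of_le_ofReal zero_le_one (by simpa using hf1 x)
            simp only [Set.mem_ofPred_eq, Set.mem_empty_iff_false, iff_false]
            linarith
          simp [this]
    _ = (∫⁻ t in Set.Ioi (0 : ℝ), γ * Q {x | t < (f x).toReal}) + δ := by
        rw [lintegral_add_left (hQm.const_mul γ), lintegral_indicator measurableSet_Iio,
          Measure.restrict_restrict measurableSet_Iio, Set.inter_comm, Set.Ioi_inter_Iio]
        simp

/-- Two-fold composition for arbitrary multiplicative and additive parameters. -/
lemma prod_measure_le {α β : Type*} [MeasurableSpace α] [MeasurableSpace β]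
    {P₁ Q₁ : Measure α} {P₂ Q₂ : Measure β} [IsProbabilityMeasure P₁]
    [IsProbabilityMeasure P₂] [SFinite Q₂] {γ₁ γ₂ δ₁ δ₂ : ℝ≥0∞}
    (h₁ : ∀ O, MeasurableSet O → P₁ O ≤ γ₁ * Q₁ O + δ₁)
    (h₂ : ∀ O, MeasurableSet O → P₂ O ≤ γ₂ * Q₂ O + δ₂)
    {O : Set (α × β)} (hO : MeasurableSet O) :
    P₁.prod P₂ O ≤ γ₁ * γ₂ * Q₁.prod Q₂ O + (δ₁ + δ₂) := by
  have hm : Measurable fun x => Q₂ (Prod.mk x ⁻¹' O) := measurable_measure_prodMk_left hO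
  have hmin : Measurable fun x => min (γ₂ * Q₂ (Prod.mk x ⁻¹' O)) 1 :=
    (hm.const_mul γ₂).min measurable_const
  rw [Measure.prod_apply hO, Measure.prod_apply hO]
  calc ∫⁻ x, P₂ (Prod.mk x ⁻¹' O) ∂P₁
      ≤ ∫⁻ x, (min (γ₂ * Q₂ (Prod.mk x ⁻¹' O)) 1 + δ₂) ∂P₁ := by
        refine lintegral_mono fun x => ?_
        rw [← min_add_add_right]
        exact le_min (h₂ _ (measurable_prodMk_left hO)) (prob_le_one.trans le_self_add)
    _ = ∫⁻ x, min (γ₂ * Q₂ (Prod.mk x ⁻¹' O)) 1 ∂P₁ + δ₂ := by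
        rw [lintegral_add_left hmin]
        simp
    _ ≤ γ₁ * ∫⁻ x, min (γ₂ * Q₂ (Prod.mk x ⁻¹' O)) 1 ∂Q₁ + δ₁ + δ₂ := by
        gcongr
        exact lintegral_le_of_forall_measure_le h₁ hmin fun x => min_le_right _ _
    _ ≤ γ₁ * ∫⁻ x, γ₂ * Q₂ (Prod.mk x ⁻¹' O) ∂Q₁ + δ₁ + δ₂ := by
        gcongr
        exact min_le_left _ _
    _ = γ₁ * γ₂ * ∫⁻ x, Q₂ (Prod.mk x ⁻¹' O) ∂Q₁ + (δ₁ + δ₂) := by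
        rw [lintegral_const_mul γ₂ hm, mul_assoc, add_assoc]

lemma pi_measure_le {γ δ : ℝ≥0∞} (L : ℕ) {Ω : Fin L → Type*} [∀ ℓ, MeasurableSpace (Ω ℓ)]
    (P Q : ∀ ℓ, Measure (Ω ℓ)) [∀ ℓ, IsProbabilityMeasure (P ℓ)]
    [∀ ℓ, IsProbabilityMeasure (Q ℓ)]
    (h : ∀ ℓ O, MeasurableSet O → P ℓ O ≤ γ * Q ℓ O + δ)
    {O : Set (∀ ℓ, Ω ℓ)} (hO : MeasurableSet O) :
    Measure.pi P O ≤ γ ^ L * Measure.pi Q O + L * δ := by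
  induction L with
  | zero =>
    rw [Subsingleton.elim P Q]
    simp
  | succ L ih =>
    -- Split off the coordinate `0`, reducing to a product of two measures.
    have hP := (measurePreserving_piFinSuccAbove P 0).symm
    have hQ := (measurePreserving_piFinSuccAbove Q 0).symm
    rw [← hP.measure_preimage hO.nullMeasurableSet, ← hQ.measure_preimage hO.nullMeasurableSet]
    have key := prod_measure_le (h 0)
      (fun O' hO' => ih (fun j => P ((0 : Fin (L + 1)).succAbove j))
        (fun j => Q ((0 : Fin (L + 1)).succAbove j)) (fun j => h _) hO')
      (hP.measurable hO)
    refine key.trans_eq ?_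
    rw [pow_succ']
    push_cast
    ring

/-- **L-fold basic composition.** If each of `L` mechanisms (producing
probability measures) satisfies `(ε, δ)`-DP, then the joint mechanism that
releases the independent product of all `L` outputs satisfies `(Lε, Lδ)`-DP. -/
theorem basic_composition_L {X : Type*} [MeasurableSpace X] {n L : ℕ}
    (hn : 1 ≤ n) (hL : 1 ≤ L)
    {Ω : Fin L → Type*} [∀ ℓ, MeasurableSpace (Ω ℓ)]
    (M : ∀ ℓ : Fin L, (Fin n → X) → Measure (Ω ℓ))
    (hP : ∀ ℓ D, IsProbabilityMeasure (M ℓ D))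
    {ε δ : ℝ} (hdp : ∀ ℓ, DP (M ℓ) ε δ) :
    DP (fun D => Measure.pi (fun ℓ => M ℓ D)) ((L : ℝ) * ε) ((L : ℝ) * δ) := by
  intro D D' hD O hO
  have key := pi_measure_le L (fun ℓ => M ℓ D) (fun ℓ => M ℓ D')
    (fun ℓ O' hO' => hdp ℓ D D' hD O' hO') hO
  rwa [Real.exp_nat_mul, ENNReal.ofReal_pow (Real.exp_pos ε).le,
    ENNReal.ofReal_mul (Nat.cast_nonneg L), ENNReal.ofReal_natCast]
end
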